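/- If DC holds, then for all integers k ≥ 3 and r ≥ 1, R_{2r}(k) − 1 ≥ (R_r(k−1) − 1) · (R_r(k+1) − 1). -/

import Mathlib

open Filter Topology
open scoped ENNReal

/-- `N` has the Ramsey property for the tuple `k`: every `r`-coloring of the
edges of the complete graph on `N` vertices admits a color `i` and a set of
`k i` vertices all of whose connecting edges have color `i`. -/
def ramseyProp {r : ℕ} (k : Fin r → ℕ) (N : ℕ) : Prop :=
  ∀ c : Sym2 (Fin N) → Fin r, ∃ i : Fin r, ∃ S : Finset (Fin N),
    S.card = k i ∧ ∀ u ∈ S, ∀ v ∈ S, u ≠ v → c s(u, v) = i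

/-- The multicolor Ramsey number `R(k 0, …, k (r-1))`: the least positive `N`
with the Ramsey property. -/
noncomputable def multiRamsey {r : ℕ} (k : Fin r → ℕ) : ℕ :=
  sInf {N | 0 < N ∧ ramseyProp k N}

/-- The diagonal multicolor Ramsey number `R_r(k)`. -/
noncomputable def diagRamsey (r k : ℕ) : ℕ :=
  multiRamsey (fun _ : Fin r => k)

/-- DC, the "decreasing conjecture". -/
def DC : Prop :=
  ∀ (r : ℕ), 2 ≤ r → ∀ k : Fin r → ℕ, (∀ l, 2 ≤ k l) →
    ∀ i j : Fin r, i ≠ j → 3 ≤ k i → k i ≤ k j →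
      multiRamsey (fun l => if l = i then k i - 1 else if l = j then k j + 1 else k l)
        ≤ multiRamsey k

/-!
Let `c` avoid cliques of size `k i` in each color `i`, and let `d`, using a disjoint set of colors,
avoid cliques of size `l j` in each color `j`. Color an edge of the product of their vertex sets by
`c` if the first coordinates of its ends differ, and by `d` applied to the second coordinates
otherwise. A clique in a color of `c` projects injectively to the first factor, while a clique in a
color of `d` lies in a single copy of the second factor, so this coloring avoids all the cliques in
question. Hence `(R(k) - 1) * (R(l) - 1) ≤ R(k, l) - 1`, where `R(k, l)` has all the colors of both.
Applying DC to the `r` pairs of colors `(k i, l i)` one after the other gives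
`R(k - 1, l + 1) ≤ R(k, l)`, and combining the two bounds proves the theorem.
-/

section Colorings

variable {V W κ ι : Type*}

/-- `S` is a clique of color `i` in the edge coloring `c` of the complete graph on `V`. The values
of `c` on the diagonal of `Sym2 V` are ignored, as in `ramseyProp`. -/
def IsMonochromatic (c : Sym2 V → κ) (i : κ) (S : Set V) : Prop :=
  S.Pairwise fun u v => c s(u, v) = i

/-- `c` is a coloring without a clique of size `k i` in any color `i`: when the number of colors is
finite, the existence of such a coloring says that `V` has fewer than `R(k)` vertices. -/
def IsRamseyColoring (c : Sym2 V → κ) (k : κ → ℕ) : Prop :=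
  ∀ (i : κ) (S : Finset V), IsMonochromatic c i S → S.card ≠ k i

theorem IsMonochromatic.insert {c : Sym2 V → κ} {i : κ} {S : Set V} {v : V}
    (hS : IsMonochromatic c i S) (hv : ∀ w ∈ S, c s(v, w) = i) :
    IsMonochromatic c i (insert v S) := by
  have : Std.Symm fun u w => c s(u, w) = i := ⟨fun u w h => by rwa [Sym2.eq_swap]⟩
  exact hS.insert_of_symm fun w hw _ => hv w hw

theorem IsMonochromatic.image {c : Sym2 W → κ} {i : κ} {S : Set V} {f : V → W}
    (hS : IsMonochromatic (c ∘ Sym2.map f) i S) : IsMonochromatic c i (f '' S) :=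
  Set.Pairwise.image hS

theorem IsRamseyColoring.ne_zero {c : Sym2 V → κ} {k : κ → ℕ} (hc : IsRamseyColoring c k)
    (i : κ) : k i ≠ 0 :=
  (hc i ∅ (by simp [IsMonochromatic])).symm

theorem IsRamseyColoring.comap {c : Sym2 W → κ} {k : κ → ℕ} (hc : IsRamseyColoring c k)
    (f : V ↪ W) : IsRamseyColoring (c ∘ Sym2.map f) k := fun i S hS hcard =>
  hc i (S.map f) (by simpa only [Finset.coe_map] using hS.image) (by rwa [Finset.card_map])

theorem IsRamseyColoring.equiv_comp {c : Sym2 V → κ} {k : ι → ℕ} (e : κ ≃ ι)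
    (hc : IsRamseyColoring c (k ∘ e)) : IsRamseyColoring (e ∘ c) k := fun i S hS hcard =>
  hc (e.symm i) S (fun u hu v hv huv => e.eq_symm_apply.mpr (hS hu hv huv)) (by simpa using hcard)

end Colorings

section RamseyTheorem

variable {V κ : Type*} [DecidableEq κ]

theorem IsRamseyColoring.restrict_neighbors {c : Sym2 V → κ} {k : κ → ℕ}
    (hc : IsRamseyColoring c k) (v : V) (i : κ) :
    IsRamseyColoring (c ∘ Sym2.map ((↑) : {w // w ≠ v ∧ c s(v, w) = i} → V))
      (Function.update k i (k i - 1)) := by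
  intro j S hS hcard
  have hT := hS.image
  obtain rfl | hji := eq_or_ne j i
  · refine hc j ((S.map (Function.Embedding.subtype _)).cons v (by simp)) ?_ ?_
    · simpa using hT.insert (by rintro _ ⟨w, -, rfl⟩; exact w.2.2)
    · have := hc.ne_zero j
      rw [Finset.card_cons, Finset.card_map, hcard, Function.update_self]
      omega
  · refine hc j (S.map (Function.Embedding.subtype _)) (by simpa using hT) ?_
    rw [Finset.card_map, hcard, Function.update_of_ne hji]

theorem card_le_sum_card_neighbors_add_one [Fintype V] [DecidableEq V] [Fintype κ]
    (c : Sym2 V → κ) (v : V) :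
    Fintype.card V ≤ ∑ i, Fintype.card {w // w ≠ v ∧ c s(v, w) = i} + 1 := by
  have hsum : (Finset.univ.erase v).card = ∑ i, Fintype.card {w // w ≠ v ∧ c s(v, w) = i} := by
    rw [Finset.card_eq_sum_card_fiberwise (f := fun w => c s(v, w)) (t := Finset.univ) (by simp)]
    refine Finset.sum_congr rfl fun i _ => ?_
    rw [Fintype.card_subtype]
    congr 1
    ext w
    simp
  rw [← hsum, Finset.card_erase_add_one (Finset.mem_univ v), Finset.card_univ]

end RamseyTheorem

universe u

theorem exists_card_le_of_isRamseyColoring {κ : Type*} [Finite κ] (k : κ → ℕ) :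
    ∃ N, ∀ {V : Type u} [Fintype V] {c : Sym2 V → κ}, IsRamseyColoring c k →
      Fintype.card V ≤ N := by
  classical
  have := Fintype.ofFinite κ
  induction k using WellFoundedLT.induction with
  | ind k ih =>
    by_cases hk : ∃ i, k i = 0
    · obtain ⟨i, hi⟩ := hk
      exact ⟨0, fun hc => (hc.ne_zero i hi).elim⟩
    push Not at hk
    choose N hN using fun i => ih (Function.update k i (k i - 1))
      (update_lt_self_iff.mpr (Nat.sub_one_lt (hk i)))
    refine ⟨∑ i, N i + 1, fun {V} _ c hc => ?_⟩
    obtain hV | ⟨⟨v⟩⟩ := isEmpty_or_nonempty V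
    · simp
    calc Fintype.card V ≤ ∑ i, Fintype.card {w // w ≠ v ∧ c s(v, w) = i} + 1 :=
          card_le_sum_card_neighbors_add_one c v
      _ ≤ ∑ i, N i + 1 := by
          gcongr with i
          exact hN i (hc.restrict_neighbors v i)

section MultiRamsey

variable {r : ℕ} {k : Fin r → ℕ}

theorem not_ramseyProp_iff {N : ℕ} :
    ¬ ramseyProp k N ↔ ∃ c : Sym2 (Fin N) → Fin r, IsRamseyColoring c k := by
  simp only [ramseyProp, not_forall, not_exists, not_and']
  rfl

theorem ramseyProp_multiRamsey (k : Fin r → ℕ) : ramseyProp k (multiRamsey k) := by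
  obtain ⟨N, hN⟩ := exists_card_le_of_isRamseyColoring k
  have hramsey : ramseyProp k (N + 1) := by
    by_contra h
    obtain ⟨c, hc⟩ := not_ramseyProp_iff.mp h
    simpa using hN hc
  exact (Nat.sInf_mem (s := {N | 0 < N ∧ ramseyProp k N}) ⟨N + 1, N.succ_pos, hramsey⟩).2

theorem IsRamseyColoring.card_lt_multiRamsey {V : Type*} [Fintype V] {c : Sym2 V → Fin r}
    (hc : IsRamseyColoring c k) : Fintype.card V < multiRamsey k := by
  by_contra! hle
  obtain ⟨f⟩ : Nonempty (Fin (multiRamsey k) ↪ V) :=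
    Function.Embedding.nonempty_of_card_le (by rwa [Fintype.card_fin])
  exact not_ramseyProp_iff.mpr ⟨_, hc.comap f⟩ (ramseyProp_multiRamsey k)

theorem exists_isRamseyColoring_of_lt_multiRamsey {N : ℕ} (hN : 0 < N) (h : N < multiRamsey k) :
    ∃ c : Sym2 (Fin N) → Fin r, IsRamseyColoring c k :=
  not_ramseyProp_iff.mp fun hp => Nat.notMem_of_lt_sInf h ⟨hN, hp⟩

end MultiRamsey

section LexColoring

variable {V W κ ι : Type*} [DecidableEq V] {c : Sym2 V → κ} {d : Sym2 W → ι} {i : κ} {j : ι}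
  {S : Set (V × W)}

/-- The lexicographic product of two edge colorings with disjoint color sets, used to bound Ramsey
numbers from below: an edge is colored by its projection to `V`, or by its projection to `W` if the
former degenerates to a loop. -/
def lexColoring (c : Sym2 V → κ) (d : Sym2 W → ι) (e : Sym2 (V × W)) : κ ⊕ ι :=
  if (e.map Prod.fst).IsDiag then .inr (d (e.map Prod.snd)) else .inl (c (e.map Prod.fst))

theorem lexColoring_mk_eq_inl {x y : V × W} :
    lexColoring c d s(x, y) = .inl i ↔ x.1 ≠ y.1 ∧ c s(x.1, y.1) = i := by
  simp [lexColoring, ite_eq_iff]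

theorem lexColoring_mk_eq_inr {x y : V × W} :
    lexColoring c d s(x, y) = .inr j ↔ x.1 = y.1 ∧ d s(x.2, y.2) = j := by
  simp [lexColoring, ite_eq_iff]

namespace IsMonochromatic

theorem injOn_fst (hS : IsMonochromatic (lexColoring c d) (.inl i) S) : S.InjOn Prod.fst :=
  fun _ hx _ hy hxy => by_contra fun hne => (lexColoring_mk_eq_inl.mp (hS hx hy hne)).1 hxy

theorem image_fst (hS : IsMonochromatic (lexColoring c d) (.inl i) S) :
    IsMonochromatic c i (Prod.fst '' S) :=
  image fun _ hx _ hy hne => (lexColoring_mk_eq_inl.mp (hS hx hy hne)).2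

theorem injOn_snd (hS : IsMonochromatic (lexColoring c d) (.inr j) S) : S.InjOn Prod.snd :=
  fun _ hx _ hy hxy => by_contra fun hne =>
    hne (Prod.ext (lexColoring_mk_eq_inr.mp (hS hx hy hne)).1 hxy)

theorem image_snd (hS : IsMonochromatic (lexColoring c d) (.inr j) S) :
    IsMonochromatic d j (Prod.snd '' S) :=
  image fun _ hx _ hy hne => (lexColoring_mk_eq_inr.mp (hS hx hy hne)).2

end IsMonochromatic

theorem IsRamseyColoring.lexColoring {k : κ → ℕ} {l : ι → ℕ} (hc : IsRamseyColoring c k)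
    (hd : IsRamseyColoring d l) : IsRamseyColoring (lexColoring c d) (Sum.elim k l) := by
  classical
  rintro (i | j) S hS hcard
  · refine hc i (S.image Prod.fst) (by simpa only [Finset.coe_image] using hS.image_fst) ?_
    rwa [Finset.card_image_of_injOn hS.injOn_fst]
  · refine hd j (S.image Prod.snd) (by simpa only [Finset.coe_image] using hS.image_snd) ?_
    rwa [Finset.card_image_of_injOn hS.injOn_snd]

end LexColoring

theorem multiRamsey_sub_one_mul_le_append {r s : ℕ} (k : Fin r → ℕ) (l : Fin s → ℕ) :
    (multiRamsey k - 1) * (multiRamsey l - 1) ≤ multiRamsey (Fin.append k l) - 1 := by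
  obtain ha | ha := Nat.eq_zero_or_pos (multiRamsey k - 1)
  · simp [ha]
  obtain hb | hb := Nat.eq_zero_or_pos (multiRamsey l - 1)
  · simp [hb]
  obtain ⟨c, hc⟩ := exists_isRamseyColoring_of_lt_multiRamsey (k := k) ha (by omega)
  obtain ⟨d, hd⟩ := exists_isRamseyColoring_of_lt_multiRamsey (k := l) hb (by omega)
  have happend : Sum.elim k l = Fin.append k l ∘ finSumFinEquiv :=
    Fin.append_comp_sumElim.symm
  have hlex := (happend ▸ hc.lexColoring hd).equiv_comp finSumFinEquiv
  simpa using Nat.le_sub_one_of_lt hlex.card_lt_multiRamsey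

section Append

variable {m n : ℕ} {α : Type*}

theorem append_update_left (f : Fin m → α) (g : Fin n → α) (i : Fin m) (a : α) :
    Fin.append (Function.update f i a) g =
      Function.update (Fin.append f g) (Fin.castAdd n i) a := by
  ext x
  induction x using Fin.addCases <;>
    grind [Fin.append_left, Fin.append_right, Function.update_apply]

theorem append_update_right (f : Fin m → α) (g : Fin n → α) (i : Fin n) (a : α) :
    Fin.append f (Function.update g i a) =
      Function.update (Fin.append f g) (Fin.natAdd m i) a := by
  ext x
  induction x using Fin.addCases <;>
    grind [Fin.append_left, Fin.append_right, Function.update_apply]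

theorem append_const (a : α) :
    Fin.append (fun _ : Fin m => a) (fun _ : Fin n => a) = fun _ => a := by
  ext x
  induction x using Fin.addCases <;> simp

end Append

theorem DC.multiRamsey_update_le (hDC : DC) {r : ℕ} {k : Fin r → ℕ} (hk : ∀ l, 2 ≤ k l)
    {i j : Fin r} (hij : i ≠ j) (hi : 3 ≤ k i) (hle : k i ≤ k j) :
    multiRamsey (Function.update (Function.update k i (k i - 1)) j (k j + 1)) ≤ multiRamsey k := by
  have hr : 2 ≤ r := by omega
  convert hDC r hr k hk i j hij hi hle using 2
  ext l
  rw [Function.update_comm hij, Function.update_apply, Function.update_apply]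

theorem DC.multiRamsey_append_update_le (hDC : DC) {r s : ℕ} {k : Fin r → ℕ} {l : Fin s → ℕ}
    (hk : ∀ i, 2 ≤ k i) (hl : ∀ j, 2 ≤ l j) {i : Fin r} {j : Fin s} (hi : 3 ≤ k i)
    (hij : k i ≤ l j) :
    multiRamsey (Fin.append (Function.update k i (k i - 1)) (Function.update l j (l j + 1))) ≤
      multiRamsey (Fin.append k l) := by
  have htwo : ∀ x, 2 ≤ Fin.append k l x :=
    Fin.addCases (by simpa only [Fin.append_left] using hk)
      (by simpa only [Fin.append_right] using hl)
  have hne : Fin.castAdd s i ≠ Fin.natAdd r j :=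
    Fin.ne_of_val_ne (by simp only [Fin.val_castAdd, Fin.val_natAdd]; omega)
  simpa only [append_update_left, append_update_right, Function.update_comm hne, Fin.append_left,
    Fin.append_right] using hDC.multiRamsey_update_le htwo hne
      (by rwa [Fin.append_left]) (by rwa [Fin.append_left, Fin.append_right])

theorem DC.multiRamsey_append_sub_one_add_one_le (hDC : DC) {r : ℕ} {k l : Fin r → ℕ}
    (hk : ∀ i, 3 ≤ k i) (hkl : ∀ i, k i ≤ l i) :
    multiRamsey (Fin.append (fun i => k i - 1) fun i => l i + 1) ≤
      multiRamsey (Fin.append k l) := by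
  suffices h : ∀ s : Finset (Fin r),
      multiRamsey (Fin.append (s.piecewise (fun i => k i - 1) k) (s.piecewise (fun i => l i + 1) l))
        ≤ multiRamsey (Fin.append k l) by
    simpa only [Finset.piecewise_univ] using h Finset.univ
  intro s
  induction s using Finset.induction_on with
  | empty => simp only [Finset.piecewise_empty, le_refl]
  | insert i s hi ih =>
    refine le_trans ?_ ih
    have hk_eq := Finset.piecewise_eq_of_notMem s (fun i => k i - 1) k hi
    have hl_eq := Finset.piecewise_eq_of_notMem s (fun i => l i + 1) l hi
    have hk_two : ∀ x, 2 ≤ s.piecewise (fun i => k i - 1) k x := by grind [Finset.piecewise]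
    have hl_two : ∀ x, 2 ≤ s.piecewise (fun i => l i + 1) l x := by grind [Finset.piecewise]
    simpa only [Finset.piecewise_insert, hk_eq, hl_eq] using
      hDC.multiRamsey_append_update_le hk_two hl_two (i := i) (j := i)
        (by simpa only [hk_eq] using hk i) (by simpa only [hk_eq, hl_eq] using hkl i)

theorem stmt4_general (hDC : DC) {r : ℕ} {k l : Fin r → ℕ} (hk : ∀ i, 3 ≤ k i)
    (hkl : ∀ i, k i ≤ l i) :
    (multiRamsey (fun i => k i - 1) - 1) * (multiRamsey (fun i => l i + 1) - 1) ≤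
      multiRamsey (Fin.append k l) - 1 :=
  (multiRamsey_sub_one_mul_le_append _ _).trans
    (Nat.sub_le_sub_right (hDC.multiRamsey_append_sub_one_add_one_le hk hkl) 1)

/-- if DC holds, then `R_{2r}(k) − 1 ≥ (R_r(k−1) − 1) · (R_r(k+1) − 1)`. -/
theorem stmt4 (hDC : DC) (k : ℕ) (hk : 3 ≤ k) (r : ℕ) (hr : 1 ≤ r) :
    (diagRamsey r (k - 1) - 1) * (diagRamsey r (k + 1) - 1) ≤ diagRamsey (2 * r) k - 1 := by
  rw [two_mul]
  simpa only [diagRamsey, append_const] using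
    stmt4_general hDC (fun _ : Fin r => hk) fun _ => le_rfl
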